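/- Let k be a positive integer, let G be a finite simple graph, let I ⊆ V(G), let P be an I-connected path decomposition of G of width at most k−1, and let S be a bottleneck of G. Then there exists an I-connected path decomposition P' of G with width(P') ≤ width(P) such that P' is S-structured; moreover, in P' every connected component of G−S either is contained in the interval I(S,P') or waits in I(S,P'). -/

import Mathlib

/-!
The case where no bag contains `S` is degenerate: there are no in-branches, so `botStart` and
`botEnd` take their default value `0` and everything waits in `[0, 0]`. Otherwise the proof has
two steps.

*Refinement* (`exists_refined`). Bags are inserted in front of the first bag containing `S`, each
introducing one vertex in an order that keeps all prefixes `I`-connected, until that bag,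
`X (p + 1)`, exceeds its predecessor by a single vertex, which is then necessarily a vertex of `S`.
Consequently no vertex of an in-branch occurs in a bag `X j` with `j ≤ p + 1`: the vertices of `S`
are joined to `I` before any in-branch starts.

*Rearrangement* (`TotalDecomp.rearrange`). Let `W` be the union of the in-branches, and among the
bags containing `S` let `X c` have the fewest vertices outside `W`. The new decomposition runs
through `X 0 \ W, …, X c \ W`, then keeps `X c \ W` fixed while it runs through all the sets
`X j ∩ W`, and finally runs through `X (c + 1) \ W, …`. If `X j ∩ W` is nonempty then `X j` contains
`S`, so the choice of `c` bounds the width. A component of a prefix graph that avoids `S` is a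
component of an old prefix graph; a component meeting `S` contains a component of an old prefix
graph with index at most `p + 1`, which is free of `W`. The in-branches remain the same, and during
their interval every other component of `G - S` waits at its trace on `X c`.
-/

open SimpleGraph

variable {V : Type*}

/-- `N_G(Y)`: the set of vertices outside `Y` having a neighbor in `Y`. -/
def nbhdSet (G : SimpleGraph V) (Y : Set V) : Set V :=
  {v | v ∉ Y ∧ ∃ u ∈ Y, G.Adj u v}

/-- `C` is a connected component of the subgraph of `G` induced by `U`. -/
def IsCompIn (G : SimpleGraph V) (U C : Set V) : Prop :=
  C.Nonempty ∧ C ⊆ U ∧ (G.induce C).Connected ∧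
    ∀ u ∈ C, ∀ v ∈ U, G.Adj u v → v ∈ C

/-- `C` is a connected component of `G - S`. -/
def IsCompOf (G : SimpleGraph V) (S C : Set V) : Prop :=
  IsCompIn G Sᶜ C

/-- `C` is an `S`-branch: a connected component of `G - S` with `N_G(C) = S`. -/
def IsBranch (G : SimpleGraph V) (S C : Set V) : Prop :=
  IsCompOf G S C ∧ nbhdSet G C = S

/-- `S` is a bottleneck (for the width parameter `k`): a nonempty set with
at least `2k+1` `S`-branches. -/
def IsBottleneck (G : SimpleGraph V) (k : ℕ) (S : Set V) : Prop :=
  S.Nonempty ∧ 2 * k + 1 ≤ {C : Set V | IsBranch G S C}.ncard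

/-- `(X 0, …, X (l-1))` is a path decomposition of `G`. -/
def IsPathDecomp (G : SimpleGraph V) (l : ℕ) (X : ℕ → Set V) : Prop :=
  (∀ v, ∃ i < l, v ∈ X i) ∧
  (∀ u v, G.Adj u v → ∃ i < l, u ∈ X i ∧ v ∈ X i) ∧
  (∀ i j m, i ≤ j → j ≤ m → m < l → X i ∩ X m ⊆ X j)

/-- The width of a path decomposition: the maximum bag size minus one. -/
noncomputable def pdWidth (l : ℕ) (X : ℕ → Set V) : ℕ :=
  ((Finset.range l).sup fun i => (X i).ncard) - 1

/-- The set of indices of bags meeting the vertex set `C`. -/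
def supp (l : ℕ) (X : ℕ → Set V) (C : Set V) : Set ℕ :=
  {t | t < l ∧ (C ∩ X t).Nonempty}

/-- `a(C)`: the first index of a bag meeting `C`. -/
noncomputable def firstIdx (l : ℕ) (X : ℕ → Set V) (C : Set V) : ℕ :=
  sInf (supp l X C)

/-- `b(C)`: the last index of a bag meeting `C`. -/
noncomputable def lastIdx (l : ℕ) (X : ℕ → Set V) (C : Set V) : ℕ :=
  sSup (supp l X C)

/-- `C` is an in-branch of `S` with respect to the decomposition:
an `S`-branch with `S ⊆ X (a C)` and `S ⊆ X (b C)`. -/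
def IsInBranch (G : SimpleGraph V) (l : ℕ) (X : ℕ → Set V) (S C : Set V) : Prop :=
  IsBranch G S C ∧ S ⊆ X (firstIdx l X C) ∧ S ⊆ X (lastIdx l X C)

/-- `α(S)`: the minimum of `a(H)` over in-branches `H` of `S`. -/
noncomputable def botStart (G : SimpleGraph V) (l : ℕ) (X : ℕ → Set V) (S : Set V) : ℕ :=
  sInf {i | ∃ C, IsInBranch G l X S C ∧ i = firstIdx l X C}

/-- `β(S)`: the maximum of `b(H)` over in-branches `H` of `S`. -/
noncomputable def botEnd (G : SimpleGraph V) (l : ℕ) (X : ℕ → Set V) (S : Set V) : ℕ :=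
  sSup {i | ∃ C, IsInBranch G l X S C ∧ i = lastIdx l X C}

/-- The interval `I(S,P) = [α(S), β(S)]` of a bottleneck `S`. -/
noncomputable def botInterval (G : SimpleGraph V) (l : ℕ) (X : ℕ → Set V) (S : Set V) : Set ℕ :=
  Set.Icc (botStart G l X S) (botEnd G l X S)

/-- A pre-branch of `S`. -/
def IsPreBranch (G : SimpleGraph V) (l : ℕ) (X : ℕ → Set V) (S C : Set V) : Prop :=
  IsBranch G S C ∧ ¬ IsInBranch G l X S C ∧ firstIdx l X C < botStart G l X S

/-- A post-branch of `S`. -/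
def IsPostBranch (G : SimpleGraph V) (l : ℕ) (X : ℕ → Set V) (S C : Set V) : Prop :=
  IsBranch G S C ∧ ¬ IsInBranch G l X S C ∧
    botStart G l X S ≤ firstIdx l X C ∧ botEnd G l X S < lastIdx l X C

/-- `C` waits in the interval `[i, j]` of the decomposition. -/
def WaitsIn (X : ℕ → Set V) (C : Set V) (i j : ℕ) : Prop :=
  ∀ t, i ≤ t → t ≤ j → C ∩ X t = C ∩ X i

/-- The decomposition is `S`-structured: every component of `G - S` that is not an
`S`-branch, and every pre- or post-branch of `S`, waits in `I(S,P)`. -/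
def IsStructured (G : SimpleGraph V) (l : ℕ) (X : ℕ → Set V) (S : Set V) : Prop :=
  ∀ C : Set V,
    ((IsCompOf G S C ∧ ¬ IsBranch G S C) ∨ IsPreBranch G l X S C ∨ IsPostBranch G l X S C) →
    WaitsIn X C (botStart G l X S) (botEnd G l X S)

/-- The decomposition is `I`-connected: every connected component of the subgraph
induced by any prefix of bags contains a vertex of `I`. -/
def IsIConn (G : SimpleGraph V) (l : ℕ) (X : ℕ → Set V) (I : Set V) : Prop :=
  ∀ i < l, ∀ C : Set V, IsCompIn G {v | ∃ j ≤ i, v ∈ X j} C → (C ∩ I).Nonempty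

/-! ### Components of induced subgraphs -/

lemma subset_of_connected_of_closed {G : SimpleGraph V} {C D : Set V}
    (hC : (G.induce C).Connected) {x : V} (hxC : x ∈ C) (hxD : x ∈ D)
    (hcl : ∀ u ∈ D, ∀ v ∈ C, G.Adj u v → v ∈ D) : C ⊆ D := by
  intro y hy
  obtain ⟨w⟩ := hC.preconnected ⟨x, hxC⟩ ⟨y, hy⟩
  have key : ∀ (a b : C), (G.induce C).Walk a b → (a : V) ∈ D → (b : V) ∈ D := by
    intro a b w
    induction w with
    | nil => exact id
    | cons h _ ih => exact fun ha => ih (hcl _ ha _ (Subtype.property _) h)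
  exact key _ _ w hxD

lemma exists_isCompIn (G : SimpleGraph V) {U : Set V} {s : V} (hs : s ∈ U) :
    ∃ D, IsCompIn G U D ∧ s ∈ D := by
  refine ⟨{v | ∃ w : G.Walk s v, ∀ x ∈ w.support, x ∈ U}, ?_, ?_⟩
  · have hsD : s ∈ {v | ∃ w : G.Walk s v, ∀ x ∈ w.support, x ∈ U} :=
      ⟨Walk.nil, by simpa using hs⟩
    refine ⟨⟨s, hsD⟩, ?_, ?_, ?_⟩
    · rintro v ⟨w, hw⟩
      exact hw v w.end_mem_support
    · refine induce_connected_of_patches s hsD ?_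
      rintro v ⟨w, hw⟩
      refine ⟨{x | x ∈ w.support}, ?_, w.start_mem_support, w.end_mem_support,
        w.connected_induce_support.preconnected _ _⟩
      intro x hx
      classical
      exact ⟨w.takeUntil x hx, fun y hy => hw y (w.support_takeUntil_subset_support hx hy)⟩
    · rintro u ⟨w, hw⟩ v hv huv
      refine ⟨w.concat huv, fun x hx => ?_⟩
      rw [Walk.support_concat] at hx
      simp only [List.mem_append, List.mem_singleton] at hx
      rcases hx with hx | rfl
      · exact hw x hx
      · exact hv
  · exact ⟨Walk.nil, by simpa using hs⟩

/-- A component `Z` of `G[U]` that meets a subset `U'` of `U` contains a component of `G[U']`. -/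
lemma inter_nonempty_of_prefix {G : SimpleGraph V} {U U' Z I : Set V} {s : V}
    (hZ : IsCompIn G U Z) (hsub : U' ⊆ U) (hsZ : s ∈ Z) (hsU : s ∈ U')
    (hI : ∀ C, IsCompIn G U' C → (C ∩ I).Nonempty) : (Z ∩ I).Nonempty := by
  obtain ⟨D, hD, hsD⟩ := exists_isCompIn G hsU
  have hDZ : D ⊆ Z := subset_of_connected_of_closed hD.2.2.1 hsD hsZ
    fun u hu v hv h => hZ.2.2.2 u hu v (hsub (hD.2.1 hv)) h
  exact (hI D hD).mono (Set.inter_subset_inter_left _ hDZ)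

lemma IsCompOf.eq_of_mem {G : SimpleGraph V} {S C D : Set V} (hC : IsCompOf G S C)
    (hD : IsCompOf G S D) {x : V} (hxC : x ∈ C) (hxD : x ∈ D) : C = D :=
  Set.Subset.antisymm
    (subset_of_connected_of_closed hC.2.2.1 hxC hxD
      fun u hu v hv h => hD.2.2.2 u hu v (hC.2.1 hv) h)
    (subset_of_connected_of_closed hD.2.2.1 hxD hxC
      fun u hu v hv h => hC.2.2.2 u hu v (hD.2.1 hv) h)

/-! ### Decompositions indexed by all natural numbers -/

/-- The union of the bags `X 0, …, X i`. -/
def prefixSet (X : ℕ → Set V) (i : ℕ) : Set V := {v | ∃ j ≤ i, v ∈ X j}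

/-- An `I`-connected path decomposition with bags of size at most `w`, indexed by all of `ℕ`,
whose bags are empty from index `l` on. -/
structure TotalDecomp (G : SimpleGraph V) (I : Set V) (w l : ℕ) (X : ℕ → Set V) : Prop where
  cover : ∀ v, ∃ i, v ∈ X i
  edge : ∀ u v, G.Adj u v → ∃ i, u ∈ X i ∧ v ∈ X i
  conv : ∀ i j m v, i ≤ j → j ≤ m → v ∈ X i → v ∈ X m → v ∈ X j
  iconn : ∀ i C, IsCompIn G (prefixSet X i) C → (C ∩ I).Nonempty
  width : ∀ i, (X i).ncard ≤ w
  empty : ∀ i, l ≤ i → X i = ∅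

namespace TotalDecomp

variable {G : SimpleGraph V} {I : Set V} {w l : ℕ} {X : ℕ → Set V}

lemma lt_of_mem (h : TotalDecomp G I w l X) {v : V} {i : ℕ} (hv : v ∈ X i) : i < l := by
  by_contra hi
  rw [h.empty i (not_lt.mp hi)] at hv
  exact hv

lemma isPathDecomp (h : TotalDecomp G I w l X) : IsPathDecomp G l X := by
  refine ⟨fun v => ?_, fun u v huv => ?_, fun i j m hij hjm _ v hv => ?_⟩
  · obtain ⟨i, hi⟩ := h.cover v
    exact ⟨i, h.lt_of_mem hi, hi⟩
  · obtain ⟨i, hi, hi'⟩ := h.edge u v huv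
    exact ⟨i, h.lt_of_mem hi, hi, hi'⟩
  · exact h.conv i j m v hij hjm hv.1 hv.2

lemma isIConn (h : TotalDecomp G I w l X) : IsIConn G l X I :=
  fun i _ C hC => h.iconn i C hC

lemma mem_supp (h : TotalDecomp G I w l X) {C : Set V} {t : ℕ} :
    t ∈ supp l X C ↔ (C ∩ X t).Nonempty :=
  ⟨fun ht => ht.2, fun ht => ⟨h.lt_of_mem ht.some_mem.2, ht⟩⟩

lemma supp_nonempty (h : TotalDecomp G I w l X) {C : Set V} (hC : C.Nonempty) :
    (supp l X C).Nonempty := by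
  obtain ⟨v, hv⟩ := hC
  obtain ⟨i, hi⟩ := h.cover v
  exact ⟨i, h.mem_supp.2 ⟨v, hv, hi⟩⟩

end TotalDecomp

lemma bddAbove_supp (l : ℕ) (X : ℕ → Set V) (C : Set V) : BddAbove (supp l X C) :=
  ⟨l, fun _ ht => ht.1.le⟩

/-- An in-branch, described by all the bags it meets instead of only the first and last one. -/
def InBr (G : SimpleGraph V) (X : ℕ → Set V) (S C : Set V) : Prop :=
  IsBranch G S C ∧ ∀ t, (C ∩ X t).Nonempty → S ⊆ X t

lemma TotalDecomp.isInBranch_iff {G : SimpleGraph V} {I : Set V} {w l : ℕ} {X : ℕ → Set V}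
    (h : TotalDecomp G I w l X) (S C : Set V) : IsInBranch G l X S C ↔ InBr G X S C := by
  constructor
  · rintro ⟨hb, h1, h2⟩
    refine ⟨hb, fun t ht s hs => ?_⟩
    have ht' := h.mem_supp.2 ht
    exact h.conv _ t _ s (Nat.sInf_le ht') (le_csSup (bddAbove_supp l X C) ht') (h1 hs) (h2 hs)
  · rintro ⟨hb, hall⟩
    have hne := h.supp_nonempty hb.1.1
    exact ⟨hb, hall _ (h.mem_supp.1 (Nat.sInf_mem hne)),
      hall _ (h.mem_supp.1 (Nat.sSup_mem hne (bddAbove_supp l X C)))⟩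

/-- Prepending an empty bag, and continuing with empty bags, turns a path decomposition into a
total one. -/
lemma exists_totalDecomp {G : SimpleGraph V} {I : Set V} {l : ℕ} {X : ℕ → Set V}
    (hP : IsPathDecomp G l X) (hIc : IsIConn G l X I) {w : ℕ}
    (hw : ∀ i < l, (X i).ncard ≤ w) {S : Set V} (hS : ∃ t < l, S ⊆ X t) :
    ∃ l' X', TotalDecomp G I w l' X' ∧ X' 0 = ∅ ∧ ∃ t, S ⊆ X' t := by
  have hval : ∀ i < l, {v | 1 ≤ i + 1 ∧ i + 1 ≤ l ∧ v ∈ X (i + 1 - 1)} = X i := by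
    intro i hi
    ext v
    simp
    omega
  refine ⟨l + 1, fun t => {v | 1 ≤ t ∧ t ≤ l ∧ v ∈ X (t - 1)}, ⟨?_, ?_, ?_, ?_, ?_, ?_⟩, ?_, ?_⟩
  · intro v
    obtain ⟨i, hi, hv⟩ := hP.1 v
    exact ⟨i + 1, by simpa only [hval i hi] using hv⟩
  · intro u v huv
    obtain ⟨i, hi, hv⟩ := hP.2.1 u v huv
    exact ⟨i + 1, by simpa only [hval i hi] using hv⟩
  · rintro i j m v hij hjm ⟨h1, h2, h3⟩ ⟨h4, h5, h6⟩
    exact ⟨by omega, by omega,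
      hP.2.2 (i - 1) (j - 1) (m - 1) (by omega) (by omega) (by omega) ⟨h3, h6⟩⟩
  · intro i C hC
    obtain ⟨v, hv⟩ := hC.1
    obtain ⟨j, hj, h1, h2, h3⟩ := hC.2.1 hv
    refine hIc (min (i - 1) (l - 1)) (by omega) C ?_
    convert hC using 1
    ext x
    constructor
    · rintro ⟨j, hj, hx⟩
      exact ⟨j + 1, by omega, by omega, by omega, by simpa using hx⟩
    · rintro ⟨j, hj, h1, h2, h3⟩
      exact ⟨j - 1, by omega, h3⟩
  · intro i
    by_cases hi : 1 ≤ i ∧ i ≤ l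
    · obtain ⟨j, rfl⟩ : ∃ j, i = j + 1 := ⟨i - 1, by omega⟩
      simpa only [hval j (by omega)] using hw j (by omega)
    · have : {v | 1 ≤ i ∧ i ≤ l ∧ v ∈ X (i - 1)} = ∅ := by
        ext v
        simp only [Set.mem_ofPred_eq, Set.mem_empty_iff_false, iff_false]
        tauto
      simp only [this, Set.ncard_empty, Nat.zero_le]
  · intro i hi
    ext v
    simp only [Set.mem_ofPred_eq, Set.mem_empty_iff_false, iff_false]
    omega
  · ext v
    simp
  · obtain ⟨t, ht, hSt⟩ := hS
    exact ⟨t + 1, by simpa only [hval t ht] using hSt⟩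

/-! ### Refinement -/

/-- The sequence `X` with the bag `Y` inserted between `X p` and `X (p + 1)`. -/
def insertBag (X : ℕ → Set V) (p : ℕ) (Y : Set V) (t : ℕ) : Set V :=
  {v | (t ≤ p ∧ v ∈ X t) ∨ (t = p + 1 ∧ v ∈ Y) ∨ (p + 2 ≤ t ∧ v ∈ X (t - 1))}

lemma insertBag_of_le (X : ℕ → Set V) (p : ℕ) (Y : Set V) {t : ℕ} (ht : t ≤ p) :
    insertBag X p Y t = X t := by
  ext v
  simp only [insertBag, Set.mem_ofPred_eq]
  constructor
  · rintro (h | h | h)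
    · exact h.2
    · omega
    · omega
  · exact fun h => Or.inl ⟨ht, h⟩

lemma insertBag_mid (X : ℕ → Set V) (p : ℕ) (Y : Set V) :
    insertBag X p Y (p + 1) = Y := by
  ext v
  simp [insertBag]

lemma insertBag_succ (X : ℕ → Set V) (p : ℕ) (Y : Set V) {t : ℕ} (ht : p + 1 ≤ t) :
    insertBag X p Y (t + 1) = X t := by
  ext v
  simp only [insertBag, Set.mem_ofPred_eq]
  constructor
  · rintro (h | h | h)
    · omega
    · omega
    · simpa using h.2
  · exact fun h => Or.inr (Or.inr ⟨by omega, by simpa using h⟩)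

/-- If `v` is a new vertex of `X (p + 1)` which lies in `I` or has a neighbour in the preceding
prefix, then it may be introduced on its own just before `X (p + 1)`. -/
lemma TotalDecomp.insert [Finite V] {G : SimpleGraph V} {I : Set V} {w l : ℕ} {X : ℕ → Set V}
    (h : TotalDecomp G I w l X) {p : ℕ} {v : V} (hv : v ∈ X (p + 1))
    (hvI : v ∈ I ∨ ∃ u ∈ prefixSet X p, G.Adj v u) :
    TotalDecomp G I w (l + 1) (insertBag X p (Insert.insert v (X (p + 1) ∩ X p))) := by
  set Y : Set V := Insert.insert v (X (p + 1) ∩ X p) with hY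
  have hYsub : Y ⊆ X (p + 1) := Set.insert_subset hv Set.inter_subset_left
  have hpl : p + 1 < l := h.lt_of_mem hv
  refine ⟨?_, ?_, ?_, ?_, ?_, ?_⟩
  · intro x
    obtain ⟨i, hi⟩ := h.cover x
    rcases le_or_gt i p with hip | hip
    · exact ⟨i, by rwa [insertBag_of_le X p Y hip]⟩
    · exact ⟨i + 1, by rwa [insertBag_succ X p Y hip]⟩
  · intro x y hxy
    obtain ⟨i, hi⟩ := h.edge x y hxy
    rcases le_or_gt i p with hip | hip
    · exact ⟨i, by rwa [insertBag_of_le X p Y hip]⟩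
    · exact ⟨i + 1, by rwa [insertBag_succ X p Y hip]⟩
  · intro i j m x hij hjm hi hm
    rcases hi with ⟨hi, hxi⟩ | ⟨hi, hxi⟩ | ⟨hi, hxi⟩ <;>
    rcases hm with ⟨hm, hxm⟩ | ⟨hm, hxm⟩ | ⟨hm, hxm⟩ <;>
    rcases lt_trichotomy j (p + 1) with hj | hj | hj <;> try omega
    · exact Or.inl ⟨by omega, h.conv i j m x hij hjm hxi hxm⟩
    · exact Or.inl ⟨by omega, h.conv i j (p + 1) x hij (by omega) hxi (hYsub hxm)⟩
    · exact Or.inr (Or.inl ⟨hj, hxm⟩)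
    · exact Or.inl ⟨by omega, h.conv i j (m - 1) x hij (by omega) hxi hxm⟩
    · exact Or.inr (Or.inl ⟨hj, Or.inr
        ⟨h.conv i (p + 1) (m - 1) x (by omega) (by omega) hxi hxm,
          h.conv i p (m - 1) x (by omega) (by omega) hxi hxm⟩⟩)
    · exact Or.inr (Or.inr ⟨by omega,
        h.conv i (j - 1) (m - 1) x (by omega) (by omega) hxi hxm⟩)
    · exact Or.inr (Or.inl ⟨hj, hxi⟩)
    · exact Or.inr (Or.inl ⟨hj, hxi⟩)
    · exact Or.inr (Or.inr ⟨by omega,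
        h.conv (p + 1) (j - 1) (m - 1) x (by omega) (by omega) (hYsub hxi) hxm⟩)
    · exact Or.inr (Or.inr ⟨by omega,
        h.conv (i - 1) (j - 1) (m - 1) x (by omega) (by omega) hxi hxm⟩)
  · intro i Z hZ
    rcases lt_trichotomy i (p + 1) with hi | hi | hi
    · refine h.iconn i Z ?_
      convert hZ using 1
      ext x
      constructor
      · rintro ⟨j, hj, hx⟩
        exact ⟨j, hj, by rwa [insertBag_of_le X p Y (by omega)]⟩
      · rintro ⟨j, hj, hx⟩
        exact ⟨j, hj, by rwa [insertBag_of_le X p Y (by omega)] at hx⟩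
    · subst hi
      have hU : prefixSet (insertBag X p Y) (p + 1) = Insert.insert v (prefixSet X p) := by
        ext x
        constructor
        · rintro ⟨j, hj, ⟨hj', hx⟩ | ⟨hj', hx⟩ | ⟨hj', hx⟩⟩
          · exact Or.inr ⟨j, hj', hx⟩
          · rcases hx with hx | hx
            · exact Or.inl hx
            · exact Or.inr ⟨p, le_rfl, hx.2⟩
          · omega
        · rintro (hx | ⟨j, hj, hx⟩)
          · exact ⟨p + 1, le_rfl, Or.inr (Or.inl ⟨rfl, Or.inl hx⟩)⟩
          · exact ⟨j, by omega, Or.inl ⟨hj, hx⟩⟩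
      rw [hU] at hZ
      by_cases hvZ : v ∈ Z
      · rcases hvI with hvI | ⟨u, hu, hvu⟩
        · exact ⟨v, hvZ, hvI⟩
        · exact inter_nonempty_of_prefix hZ (Set.subset_insert _ _)
            (hZ.2.2.2 v hvZ u (Or.inr hu) hvu) hu (h.iconn p)
      · refine h.iconn p Z ⟨hZ.1, fun x hx => ?_, hZ.2.2.1,
          fun x hx y hy hxy => hZ.2.2.2 x hx y (Or.inr hy) hxy⟩
        rcases hZ.2.1 hx with rfl | hx'
        · exact absurd hx hvZ
        · exact hx'
    · refine h.iconn (i - 1) Z ?_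
      convert hZ using 1
      ext x
      constructor
      · rintro ⟨j, hj, hx⟩
        rcases le_or_gt j p with hjp | hjp
        · exact ⟨j, by omega, by rwa [insertBag_of_le X p Y hjp]⟩
        · exact ⟨j + 1, by omega, by rwa [insertBag_succ X p Y hjp]⟩
      · rintro ⟨j, hj, ⟨hj', hx⟩ | ⟨hj', hx⟩ | ⟨hj', hx⟩⟩
        · exact ⟨j, by omega, hx⟩
        · exact ⟨p + 1, by omega, hYsub hx⟩
        · exact ⟨j - 1, by omega, hx⟩
  · intro i
    rcases lt_trichotomy i (p + 1) with hi | hi | hi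
    · rw [insertBag_of_le X p Y (by omega)]
      exact h.width i
    · rw [hi, insertBag_mid]
      exact (Set.ncard_le_ncard hYsub (Set.toFinite _)).trans (h.width _)
    · obtain ⟨j, rfl⟩ : ∃ j, i = j + 1 := ⟨i - 1, by omega⟩
      rw [insertBag_succ X p Y (by omega)]
      exact h.width j
  · intro i hi
    obtain ⟨j, rfl⟩ : ∃ j, i = j + 1 := ⟨i - 1, by omega⟩
    rw [insertBag_succ X p Y (by omega)]
    exact h.empty j (by omega)

/-- Some new vertex of `X (p + 1)` can be introduced before the others. -/
lemma TotalDecomp.exists_next {G : SimpleGraph V} {I : Set V} {w l : ℕ} {X : ℕ → Set V}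
    (h : TotalDecomp G I w l X) {p : ℕ} (hne : (X (p + 1) \ X p).Nonempty) :
    ∃ v ∈ X (p + 1) \ X p, v ∈ I ∨ ∃ u ∈ prefixSet X p, G.Adj v u := by
  by_contra hcon
  push Not at hcon
  obtain ⟨v, hv⟩ := hne
  have hvU : v ∈ prefixSet X (p + 1) := ⟨p + 1, le_rfl, hv.1⟩
  obtain ⟨D, hD, hvD⟩ := exists_isCompIn G hvU
  have hDN : D ⊆ X (p + 1) \ X p := by
    refine subset_of_connected_of_closed hD.2.2.1 hvD hv fun x hx y hy hxy => ?_
    have hyp : y ∉ prefixSet X p := fun hy' => (hcon x hx).2 y hy' hxy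
    obtain ⟨j, hj, hyj⟩ := hD.2.1 hy
    have hjp : j = p + 1 := by
      by_contra hne
      exact hyp ⟨j, by omega, hyj⟩
    subst hjp
    exact ⟨hyj, fun hy' => hyp ⟨p, le_rfl, hy'⟩⟩
  obtain ⟨x, hxD, hxI⟩ := h.iconn _ D hD
  exact (hcon x (hDN hxD)).1 hxI

/-- Repeated insertion makes the first bag containing `S` introduce a single vertex. -/
lemma exists_refined [Finite V] {G : SimpleGraph V} {I S : Set V} {w : ℕ} (n : ℕ) :
    ∀ (l : ℕ) (X : ℕ → Set V) (p : ℕ), TotalDecomp G I w l X → S ⊆ X (p + 1) → ¬ S ⊆ X p →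
      (X (p + 1) \ X p).ncard ≤ n + 1 →
      ∃ l' X' p', TotalDecomp G I w l' X' ∧ S ⊆ X' (p' + 1) ∧
        ∃ s ∈ S, s ∉ X' p' ∧ X' (p' + 1) ⊆ Insert.insert s (X' p') := by
  induction n with
  | zero =>
    intro l X p h hS hS' hcard
    obtain ⟨s, hs, hsp⟩ := Set.not_subset.1 hS'
    refine ⟨l, X, p, h, hS, s, hs, hsp, fun x hx => ?_⟩
    by_cases hxp : x ∈ X p
    · exact Or.inr hxp
    · exact Or.inl ((Set.ncard_le_one (Set.toFinite _)).1 hcard x ⟨hx, hxp⟩ s ⟨hS hs, hsp⟩)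
  | succ n ih =>
    intro l X p h hS hS' hcard
    obtain ⟨s, hs, hsp⟩ := Set.not_subset.1 hS'
    obtain ⟨v, hv, hvI⟩ := h.exists_next ⟨s, hS hs, hsp⟩
    have h' := h.insert hv.1 hvI
    by_cases hSY : S ⊆ Insert.insert v (X (p + 1) ∩ X p)
    · refine ih _ _ p h' (by rwa [insertBag_mid]) (by rwa [insertBag_of_le _ _ _ le_rfl]) ?_
      rw [insertBag_mid, insertBag_of_le _ _ _ le_rfl]
      have hsub : Insert.insert v (X (p + 1) ∩ X p) \ X p ⊆ {v} := by
        rintro x ⟨hx | hx, hxp⟩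
        · exact hx
        · exact absurd hx.2 hxp
      have := Set.ncard_le_ncard hsub (Set.toFinite _)
      rw [Set.ncard_singleton] at this
      omega
    · refine ih _ _ (p + 1) h' (by rwa [insertBag_succ _ _ _ le_rfl]) (by rwa [insertBag_mid]) ?_
      rw [insertBag_succ _ _ _ le_rfl, insertBag_mid]
      have hsub : X (p + 1) \ Insert.insert v (X (p + 1) ∩ X p) ⊆ (X (p + 1) \ X p) \ {v} := by
        rintro x ⟨hx, hx'⟩
        exact ⟨⟨hx, fun hxp => hx' (Or.inr ⟨hx, hxp⟩)⟩, fun hxv => hx' (Or.inl hxv)⟩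
      have h1 := Set.ncard_le_ncard hsub (Set.toFinite _)
      have h2 := Set.ncard_sdiff_singleton_add_one hv (Set.toFinite _)
      omega

/-! ### Rearrangement -/

/-- The position in the non-`W` part of the decomposition at time `t`: it runs up to `c`, pauses
there for `l` further steps, and runs on. -/
def outPos (c l t : ℕ) : ℕ := max (min t c) (t - l)

/-- The rearranged decomposition: outside `W` it follows `X` at position `outPos c l t`, inside `W`
at position `t - c`, which is `0` until time `c`. -/
def rearr (X : ℕ → Set V) (W : Set V) (c l t : ℕ) : Set V :=
  (X (outPos c l t) \ W) ∪ (X (t - c) ∩ W)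

/-- The union of all in-branches. -/
def inUnion (G : SimpleGraph V) (X : ℕ → Set V) (S : Set V) : Set V :=
  {v | ∃ C, InBr G X S C ∧ v ∈ C}

section

variable {G : SimpleGraph V} {I S W : Set V} {w l c p : ℕ} {X : ℕ → Set V} {s₀ : V}

lemma not_mem_of_mem_inUnion {v : V} (hv : v ∈ inUnion G X S) : v ∉ S := by
  obtain ⟨C, hC, hvC⟩ := hv
  exact hC.1.1.2.1 hvC

lemma subset_of_mem_inUnion {v : V} {t : ℕ} (hv : v ∈ inUnion G X S) (hvt : v ∈ X t) :
    S ⊆ X t := by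
  obtain ⟨C, hC, hvC⟩ := hv
  exact hC.2 t ⟨v, hvC, hvt⟩

lemma mem_inUnion_of_adj {u v : V} (hv : v ∈ inUnion G X S) (huv : G.Adj u v) (hu : u ∉ S) :
    u ∈ inUnion G X S := by
  obtain ⟨C, hC, hvC⟩ := hv
  exact ⟨C, hC, hC.1.1.2.2.2 v hvC u hu huv.symm⟩

/-- If `X (p + 1)` introduces only the vertex `s₀` of `S`, then in-branches start later. -/
lemma lt_of_mem_inUnion (h : TotalDecomp G I w l X) (hSp : S ⊆ X (p + 1)) (hs₀ : s₀ ∈ S)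
    (hs₀p : s₀ ∉ X p) (hsub : X (p + 1) ⊆ Insert.insert s₀ (X p)) {v : V} {j : ℕ}
    (hv : v ∈ inUnion G X S) (hvj : v ∈ X j) : p + 1 < j := by
  by_contra hj
  have hSj := subset_of_mem_inUnion hv hvj
  rcases (not_lt.mp hj).lt_or_eq with hj | rfl
  · exact hs₀p (h.conv j p (p + 1) s₀ (by omega) (by omega) (hSj hs₀) (hSp hs₀))
  · rcases hsub hvj with rfl | hvp
    · exact not_mem_of_mem_inUnion hv hs₀
    · exact hs₀p (subset_of_mem_inUnion hv hvp hs₀)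

lemma mem_rearr_of_notMem {v : V} (hv : v ∉ W) {t : ℕ} :
    v ∈ rearr X W c l t ↔ v ∈ X (outPos c l t) := by
  simp [rearr, hv]

lemma mem_rearr_of_mem {v : V} (hv : v ∈ W) {t : ℕ} :
    v ∈ rearr X W c l t ↔ v ∈ X (t - c) := by
  simp [rearr, hv]

lemma outPos_mono {s t : ℕ} (hst : s ≤ t) : outPos c l s ≤ outPos c l t := by
  unfold outPos
  omega

lemma exists_outPos_eq {i j : ℕ} (hj : j ≤ outPos c l i) : ∃ t ≤ i, outPos c l t = j := by
  unfold outPos at *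
  rcases le_or_gt j c with hjc | hjc
  · rcases le_or_gt j i with hji | hji
    · exact ⟨j, hji, by omega⟩
    · exact ⟨i, le_rfl, by omega⟩
  · exact ⟨j + l, by omega, by omega⟩

lemma exists_outPos_eq' (j : ℕ) : ∃ t, outPos c l t = j := by
  obtain ⟨t, -, ht⟩ := exists_outPos_eq (c := c) (l := l) (i := j + l) (j := j)
    (by unfold outPos; omega)
  exact ⟨t, ht⟩

lemma outPos_eq_of_lt {t : ℕ} (h1 : 0 < t - c) (h2 : t - c < l) : outPos c l t = c := by
  unfold outPos
  omega

lemma mem_prefix_rearr_of_notMem {v : V} (hv : v ∉ W) {i : ℕ} :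
    v ∈ prefixSet (rearr X W c l) i ↔ v ∈ prefixSet X (outPos c l i) := by
  constructor
  · rintro ⟨j, hj, hvj⟩
    exact ⟨_, outPos_mono hj, (mem_rearr_of_notMem hv).1 hvj⟩
  · rintro ⟨j, hj, hvj⟩
    obtain ⟨t, ht, rfl⟩ := exists_outPos_eq hj
    exact ⟨t, ht, (mem_rearr_of_notMem hv).2 hvj⟩

/-- The condition on `X 0` accounts for `t - c = 0` at all times `t ≤ c`. -/
lemma mem_prefix_rearr_of_mem {v : V} (hv : v ∈ W) (h0 : v ∉ X 0) {i : ℕ} :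
    v ∈ prefixSet (rearr X W c l) i ↔ v ∈ prefixSet X (i - c) := by
  constructor
  · rintro ⟨j, hj, hvj⟩
    exact ⟨_, by omega, (mem_rearr_of_mem hv).1 hvj⟩
  · rintro ⟨j, hj, hvj⟩
    have hj0 : j ≠ 0 := by
      rintro rfl
      exact h0 hvj
    refine ⟨j + c, by omega, (mem_rearr_of_mem hv).2 ?_⟩
    rwa [Nat.add_sub_cancel]

/-- The trace of `X` on the in-branches and its trace on the rest may be traversed one after the
other, provided that `X c` has the fewest vertices outside the in-branches. -/
lemma TotalDecomp.rearrange [Finite V] (h : TotalDecomp G I w l X) (hSp : S ⊆ X (p + 1))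
    (hs₀ : s₀ ∈ S) (hs₀p : s₀ ∉ X p) (hsub : X (p + 1) ⊆ Insert.insert s₀ (X p))
    (hSc : S ⊆ X c)
    (hmin : ∀ t, S ⊆ X t → (X c \ inUnion G X S).ncard ≤ (X t \ inUnion G X S).ncard) :
    TotalDecomp G I w (2 * l) (rearr X (inUnion G X S) c l) := by
  set W := inUnion G X S with hW
  have hcl : c < l := h.lt_of_mem (hSc hs₀)
  have hWlt : ∀ v ∈ W, ∀ j, v ∈ X j → p + 1 < j := fun v hv j hj =>
    lt_of_mem_inUnion h hSp hs₀ hs₀p hsub hv hj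
  have hW0 : ∀ v ∈ W, v ∉ X 0 := fun v hv hv0 => by
    have := hWlt v hv 0 hv0
    omega
  have hSW : ∀ s ∈ S, s ∉ W := fun s hs hsW => not_mem_of_mem_inUnion hsW hs
  have hpc : p + 1 ≤ c := by
    by_contra hlt
    exact hs₀p (h.conv c p (p + 1) s₀ (by omega) (by omega) (hSc hs₀) (hSp hs₀))
  -- Vertices of `W` only occur while the rest of the decomposition pauses at `c`.
  have hpause : ∀ t, ∀ v ∈ W, v ∈ X (t - c) → outPos c l t = c := fun t v hv hvt =>
    outPos_eq_of_lt (by have := hWlt v hv _ hvt; omega) (h.lt_of_mem hvt)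
  refine ⟨?_, ?_, ?_, ?_, ?_, ?_⟩
  · intro v
    obtain ⟨i, hi⟩ := h.cover v
    by_cases hv : v ∈ W
    · exact ⟨i + c, (mem_rearr_of_mem hv).2 (by rwa [Nat.add_sub_cancel])⟩
    · obtain ⟨t, rfl⟩ := exists_outPos_eq' (c := c) (l := l) i
      exact ⟨t, (mem_rearr_of_notMem hv).2 hi⟩
  · have mixed : ∀ u v, G.Adj u v → u ∉ W → v ∈ W →
        ∃ i, u ∈ rearr X W c l i ∧ v ∈ rearr X W c l i := by
      intro u v huv hu hv
      obtain ⟨i, hui, hvi⟩ := h.edge u v huv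
      have huS : u ∈ S := by
        by_contra huS
        exact hu (mem_inUnion_of_adj hv huv huS)
      have hvi' : v ∈ X (i + c - c) := by rwa [Nat.add_sub_cancel]
      refine ⟨i + c, (mem_rearr_of_notMem hu).2 ?_, (mem_rearr_of_mem hv).2 hvi'⟩
      rw [hpause _ v hv hvi']
      exact hSc huS
    intro u v huv
    by_cases hu : u ∈ W <;> by_cases hv : v ∈ W
    · obtain ⟨i, hui, hvi⟩ := h.edge u v huv
      exact ⟨i + c, (mem_rearr_of_mem hu).2 (by rwa [Nat.add_sub_cancel]),
        (mem_rearr_of_mem hv).2 (by rwa [Nat.add_sub_cancel])⟩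
    · obtain ⟨i, h1, h2⟩ := mixed v u huv.symm hv hu
      exact ⟨i, h2, h1⟩
    · exact mixed u v huv hu hv
    · obtain ⟨i, hui, hvi⟩ := h.edge u v huv
      obtain ⟨t, rfl⟩ := exists_outPos_eq' (c := c) (l := l) i
      exact ⟨t, (mem_rearr_of_notMem hu).2 hui, (mem_rearr_of_notMem hv).2 hvi⟩
  · intro i j m v hij hjm hi hm
    by_cases hv : v ∈ W
    · rw [mem_rearr_of_mem hv] at hi hm ⊢
      exact h.conv _ _ _ v (by omega) (by omega) hi hm
    · rw [mem_rearr_of_notMem hv] at hi hm ⊢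
      exact h.conv _ _ _ v (outPos_mono hij) (outPos_mono hjm) hi hm
  · intro i Z hZ
    by_cases hZS : ∃ s ∈ Z, s ∈ S
    · obtain ⟨s, hsZ, hsS⟩ := hZS
      -- The old prefix of index `min (outPos c l i) (p + 1)` contains `s` and avoids `W`.
      refine inter_nonempty_of_prefix (U' := prefixSet X (min (outPos c l i) (p + 1)))
        hZ ?_ hsZ ?_ (h.iconn _)
      · rintro v ⟨j, hj, hvj⟩
        have hvW : v ∉ W := fun hvW => by
          have := hWlt v hvW j hvj
          omega
        exact (mem_prefix_rearr_of_notMem hvW).2 ⟨j, by omega, hvj⟩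
      · obtain ⟨j, hj, hsj⟩ := (mem_prefix_rearr_of_notMem (hSW s hsS)).1 (hZ.2.1 hsZ)
        rcases le_or_gt j (p + 1) with hjp | hjp
        · exact ⟨j, by omega, hsj⟩
        · exact ⟨p + 1, by omega, hSp hsS⟩
    · push Not at hZS
      by_cases hZW : ∃ z ∈ Z, z ∈ W
      · obtain ⟨z, hzZ, C, hC, hzC⟩ := hZW
        have hZC : Z ⊆ C := subset_of_connected_of_closed hZ.2.2.1 hzZ hzC
          fun u hu v hv huv => hC.1.1.2.2.2 u hu v (hZS v hv) huv
        have hCW : C ⊆ W := fun x hx => ⟨C, hC, hx⟩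
        refine h.iconn (i - c) Z ⟨hZ.1, fun x hx => ?_, hZ.2.2.1, fun u hu v hv huv => ?_⟩
        · have hxW := hCW (hZC hx)
          exact (mem_prefix_rearr_of_mem hxW (hW0 x hxW)).1 (hZ.2.1 hx)
        · refine hZ.2.2.2 u hu v ?_ huv
          by_cases hvS : v ∈ S
          · have huW := hCW (hZC hu)
            obtain ⟨j, hj, huj⟩ := (mem_prefix_rearr_of_mem huW (hW0 u huW)).1 (hZ.2.1 hu)
            have hj0 := hWlt u huW j huj
            refine (mem_prefix_rearr_of_notMem (hSW v hvS)).2 ⟨c, ?_, hSc hvS⟩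
            unfold outPos
            omega
          · have hvW : v ∈ W := hCW (hC.1.1.2.2.2 u (hZC hu) v hvS huv)
            exact (mem_prefix_rearr_of_mem hvW (hW0 v hvW)).2 hv
      · push Not at hZW
        refine h.iconn (outPos c l i) Z ⟨hZ.1, fun x hx => ?_, hZ.2.2.1, fun u hu v hv huv => ?_⟩
        · exact (mem_prefix_rearr_of_notMem (hZW x hx)).1 (hZ.2.1 hx)
        · have hvW : v ∉ W := fun hvW => hZW u hu (mem_inUnion_of_adj hvW huv (hZS u hu))
          exact hZ.2.2.2 u hu v ((mem_prefix_rearr_of_notMem hvW).2 hv) huv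
  · intro t
    by_cases hne : (X (t - c) ∩ W).Nonempty
    · obtain ⟨v, hvt, hv⟩ := hne
      unfold rearr
      rw [hpause t v hv hvt]
      calc _ ≤ (X c \ W).ncard + (X (t - c) ∩ W).ncard := Set.ncard_union_le _ _
        _ ≤ (X (t - c) \ W).ncard + (X (t - c) ∩ W).ncard :=
          Nat.add_le_add_right (hmin _ (subset_of_mem_inUnion hv hvt)) _
        _ = (X (t - c)).ncard := by
          rw [add_comm]
          exact Set.ncard_inter_add_ncard_sdiff_eq_ncard _ _ (Set.toFinite _)
        _ ≤ w := h.width _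
    · rw [Set.not_nonempty_iff_eq_empty] at hne
      unfold rearr
      rw [hne, Set.union_empty]
      exact (Set.ncard_le_ncard Set.sdiff_subset (Set.toFinite _)).trans (h.width _)
  · intro t ht
    unfold rearr
    rw [h.empty (t - c) (by omega), h.empty (outPos c l t) (by unfold outPos; omega)]
    simp

end

/-! ### The interval of `S` -/

lemma botStart_eq_zero_of_forall_not {G : SimpleGraph V} {l : ℕ} {X : ℕ → Set V} {S : Set V}
    (h : ∀ C, ¬ IsInBranch G l X S C) : botStart G l X S = 0 ∧ botEnd G l X S = 0 := by
  have h1 : {i | ∃ C, IsInBranch G l X S C ∧ i = firstIdx l X C} = ∅ := by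
    ext i
    simp [h]
  have h2 : {i | ∃ C, IsInBranch G l X S C ∧ i = lastIdx l X C} = ∅ := by
    ext i
    simp [h]
  unfold botStart botEnd
  rw [h1, h2]
  simp

lemma WaitsIn.of_forall_not {G : SimpleGraph V} {l : ℕ} {X : ℕ → Set V} {S : Set V}
    (h : ∀ C, ¬ IsInBranch G l X S C) (C : Set V) :
    WaitsIn X C (botStart G l X S) (botEnd G l X S) := by
  obtain ⟨h1, h2⟩ := botStart_eq_zero_of_forall_not h
  rw [h1, h2]
  intro t _ ht
  rw [Nat.le_zero.1 ht]

section

variable {G : SimpleGraph V} {I S : Set V} {w l : ℕ} {X : ℕ → Set V}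

lemma bddAbove_lastIdx (h : TotalDecomp G I w l X) (S : Set V) :
    BddAbove {i | ∃ C, IsInBranch G l X S C ∧ i = lastIdx l X C} := by
  refine ⟨l, ?_⟩
  rintro _ ⟨C, hC, rfl⟩
  exact (Nat.sSup_mem (h.supp_nonempty hC.1.1.1) (bddAbove_supp l X C)).1.le

lemma supp_subset_botInterval (h : TotalDecomp G I w l X) {C : Set V}
    (hC : IsInBranch G l X S C) : supp l X C ⊆ botInterval G l X S := by
  intro t ht
  have h1 : botStart G l X S ≤ firstIdx l X C := Nat.sInf_le ⟨C, hC, rfl⟩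
  have h2 : lastIdx l X C ≤ botEnd G l X S := le_csSup (bddAbove_lastIdx h S) ⟨C, hC, rfl⟩
  exact ⟨h1.trans (Nat.sInf_le ht), (le_csSup (bddAbove_supp l X C) ht).trans h2⟩

/-- The ends of the interval of `S` are indices of bags meeting in-branches. -/
lemma exists_isInBranch_ends (h : TotalDecomp G I w l X) {C₀ : Set V}
    (hC₀ : IsInBranch G l X S C₀) :
    (∃ C, IsInBranch G l X S C ∧ (C ∩ X (botStart G l X S)).Nonempty) ∧
      ∃ C, IsInBranch G l X S C ∧ (C ∩ X (botEnd G l X S)).Nonempty := by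
  constructor
  · obtain ⟨C, hC, he⟩ := Nat.sInf_mem
      (s := {i | ∃ C, IsInBranch G l X S C ∧ i = firstIdx l X C}) ⟨_, C₀, hC₀, rfl⟩
    refine ⟨C, hC, ?_⟩
    unfold botStart
    rw [he]
    exact (Nat.sInf_mem (h.supp_nonempty hC.1.1.1)).2
  · obtain ⟨C, hC, he⟩ := Nat.sSup_mem
      (s := {i | ∃ C, IsInBranch G l X S C ∧ i = lastIdx l X C}) ⟨_, C₀, hC₀, rfl⟩
      (bddAbove_lastIdx h S)
    refine ⟨C, hC, ?_⟩
    unfold botEnd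
    rw [he]
    exact (Nat.sSup_mem (h.supp_nonempty hC.1.1.1) (bddAbove_supp l X C)).2

end

/-- given an `I`-connected path decomposition of width at most `k-1`
and a bottleneck `S`, there is an `I`-connected path decomposition of no larger
width which is `S`-structured, and in which every component of `G - S` is either
contained in the interval of `S` or waits in it. -/
theorem stmt8 [Fintype V] (k : ℕ) (hk : 1 ≤ k) (G : SimpleGraph V) (I : Set V)
    (l : ℕ) (X : ℕ → Set V) (hP : IsPathDecomp G l X) (hIc : IsIConn G l X I)
    (hw : pdWidth l X ≤ k - 1) (S : Set V) (hS : IsBottleneck G k S) :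
    ∃ (l' : ℕ) (X' : ℕ → Set V),
      IsPathDecomp G l' X' ∧ IsIConn G l' X' I ∧
      pdWidth l' X' ≤ pdWidth l X ∧
      IsStructured G l' X' S ∧
      ∀ C : Set V, IsCompOf G S C →
        (supp l' X' C ⊆ botInterval G l' X' S ∨
          WaitsIn X' C (botStart G l' X' S) (botEnd G l' X' S)) := by
  -- It suffices that every component is an in-branch or waits.
  suffices hmain : ∃ (l' : ℕ) (X' : ℕ → Set V),
      IsPathDecomp G l' X' ∧ IsIConn G l' X' I ∧ pdWidth l' X' ≤ pdWidth l X ∧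
      ∀ C : Set V, IsCompOf G S C →
        ((IsInBranch G l' X' S C ∧ supp l' X' C ⊆ botInterval G l' X' S) ∨
          WaitsIn X' C (botStart G l' X' S) (botEnd G l' X' S)) by
    obtain ⟨l', X', h1, h2, h3, h4⟩ := hmain
    refine ⟨l', X', h1, h2, h3, fun C hC => ?_, fun C hC => (h4 C hC).imp_left And.right⟩
    rcases hC with ⟨hC, hnb⟩ | ⟨hb, hni, -⟩ | ⟨hb, hni, -⟩
    · exact (h4 C hC).resolve_left fun hin => hnb hin.1.1
    · exact (h4 C hb.1).resolve_left fun hin => hni hin.1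
    · exact (h4 C hb.1).resolve_left fun hin => hni hin.1
  by_cases hbag : ∃ t < l, S ⊆ X t
  swap
  · refine ⟨l, X, hP, hIc, le_rfl, fun C _ => Or.inr (WaitsIn.of_forall_not ?_ C)⟩
    intro D hD
    obtain ⟨v, hv⟩ := hD.1.1.1
    obtain ⟨i, hi, hvi⟩ := hP.1 v
    have hmem := Nat.sInf_mem (s := supp l X D) ⟨i, hi, v, hv, hvi⟩
    exact hbag ⟨_, hmem.1, hD.2.1⟩
  set w := (Finset.range l).sup fun i => (X i).ncard with hwdef
  have hwX : ∀ i < l, (X i).ncard ≤ w := fun i hi =>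
    Finset.le_sup (f := fun i => (X i).ncard) (Finset.mem_range.2 hi)
  obtain ⟨l₁, X₁, hT₁, hX₁0, ht⟩ := exists_totalDecomp hP hIc hwX hbag
  -- The first bag containing `S` has a predecessor, since `X₁ 0` is empty.
  obtain ⟨p₁, hp₁, hp₁'⟩ : ∃ p, S ⊆ X₁ (p + 1) ∧ ¬ S ⊆ X₁ p := by
    classical
    have hfind := Nat.find_spec ht
    obtain ⟨p, hp⟩ : ∃ p, Nat.find ht = p + 1 := by
      refine Nat.exists_eq_succ_of_ne_zero fun h0 => ?_
      rw [h0, hX₁0] at hfind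
      exact hS.1.ne_empty (Set.subset_empty_iff.1 hfind)
    exact ⟨p, hp ▸ hfind, Nat.find_min ht (by omega)⟩
  obtain ⟨l₂, Y, p, hY, hSp, s₀, hs₀, hs₀p, hsub⟩ :=
    exists_refined _ l₁ X₁ p₁ hT₁ hp₁ hp₁' (Nat.le_succ _)
  obtain ⟨c, hSc, hmin⟩ : ∃ c, S ⊆ Y c ∧ ∀ t, S ⊆ Y t →
      (Y c \ inUnion G Y S).ncard ≤ (Y t \ inUnion G Y S).ncard := by
    classical
    have hex : ∃ n, ∃ t, S ⊆ Y t ∧ (Y t \ inUnion G Y S).ncard = n := ⟨_, p + 1, hSp, rfl⟩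
    obtain ⟨c, hc, hcn⟩ := Nat.find_spec hex
    exact ⟨c, hc, fun t ht => hcn ▸ Nat.find_min' hex ⟨t, ht, rfl⟩⟩
  have hZ := hY.rearrange hSp hs₀ hs₀p hsub hSc hmin
  set Z := rearr Y (inUnion G Y S) c l₂ with hZdef
  -- New bags meeting an old in-branch occur during the pause at `c`.
  have hpause : ∀ C, InBr G Y S C → ∀ t, (C ∩ Z t).Nonempty →
      0 < t - c ∧ t - c < l₂ := by
    rintro C hC t ⟨v, hvC, hvt⟩
    have hvW : v ∈ inUnion G Y S := ⟨C, hC, hvC⟩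
    rw [hZdef, mem_rearr_of_mem hvW] at hvt
    have := lt_of_mem_inUnion hY hSp hs₀ hs₀p hsub hvW hvt
    exact ⟨by omega, hY.lt_of_mem hvt⟩
  have hSW : ∀ s ∈ S, s ∉ inUnion G Y S := fun s hs hsW => not_mem_of_mem_inUnion hsW hs
  have hin : ∀ C, InBr G Y S C → IsInBranch G (2 * l₂) Z S C := by
    intro C hC
    rw [hZ.isInBranch_iff]
    refine ⟨hC.1, fun t ht s hs => ?_⟩
    obtain ⟨h1, h2⟩ := hpause C hC t ht
    rw [hZdef, mem_rearr_of_notMem (hSW s hs), outPos_eq_of_lt h1 h2]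
    exact hSc hs
  have hdisj : ∀ C, IsCompOf G S C → ¬ InBr G Y S C → ∀ v ∈ C, v ∉ inUnion G Y S := by
    rintro C hC hni v hv ⟨D, hD, hvD⟩
    rw [hC.eq_of_mem hD.1.1 hv hvD] at hni
    exact hni hD
  have hin' : ∀ C, IsInBranch G (2 * l₂) Z S C → InBr G Y S C := by
    intro C hC
    rw [hZ.isInBranch_iff] at hC
    by_contra hni
    refine hni ⟨hC.1, fun j hj s hs => ?_⟩
    obtain ⟨v, hvC, hvj⟩ := hj
    obtain ⟨t, rfl⟩ := exists_outPos_eq' (c := c) (l := l₂) j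
    have hst := hC.2 t ⟨v, hvC, (mem_rearr_of_notMem (hdisj C hC.1.1 hni v hvC)).2 hvj⟩ hs
    exact (mem_rearr_of_notMem (hSW s hs)).1 hst
  refine ⟨2 * l₂, Z, hZ.isPathDecomp, hZ.isIConn, ?_, fun C hC => ?_⟩
  · unfold pdWidth
    exact Nat.sub_le_sub_right (Finset.sup_le fun i _ => hZ.width i) 1
  by_cases hCin : InBr G Y S C
  · exact Or.inl ⟨hin C hCin, supp_subset_botInterval hZ (hin C hCin)⟩
  right
  by_cases hex : ∃ C₀, IsInBranch G (2 * l₂) Z S C₀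
  swap
  · exact WaitsIn.of_forall_not (not_exists.1 hex) C
  obtain ⟨C₀, hC₀⟩ := hex
  obtain ⟨⟨C₁, hC₁, hne₁⟩, C₂, hC₂, hne₂⟩ := exists_isInBranch_ends hZ hC₀
  have h1 := hpause C₁ (hin' C₁ hC₁) _ hne₁
  have h2 := hpause C₂ (hin' C₂ hC₂) _ hne₂
  intro t ht1 ht2
  ext v
  refine and_congr_right fun hv => ?_
  have hvW := hdisj C hC hCin v hv
  rw [hZdef, mem_rearr_of_notMem hvW, mem_rearr_of_notMem hvW,
    outPos_eq_of_lt h1.1 h1.2, outPos_eq_of_lt (by omega) (by omega)]
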